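/- Let w ≥ 5 be an integer and q = w−3, u = w−2. Then Σ_{a+b+c+d=w, a≥2, b,c,d≥1} 2^a·ζ(a,b,c,d) = 4ζ(w) + 2ζ(3,q) − q·ζ(u,2). -/

import Mathlib

/-- The multiple zeta value `ζ(s₁,…,s_d) = Σ_{k₁>⋯>k_d≥1} 1/(k₁^{s₁}⋯k_d^{s_d})`. -/
noncomputable def mzv {d : ℕ} (s : Fin d → ℕ) : ℝ :=
  ∑' k : {k : Fin d → ℕ // StrictAnti k ∧ ∀ i, 0 < k i},
    ∏ i, (1 : ℝ) / (k.1 i : ℝ) ^ s i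

section
open Filter Topology

open Filter Topology

lemma hs_congr {ι : Type*} {f g : ι → ℝ} {a b : ℝ} (h : HasSum f a) (hf : ∀ n, g n = f n) (hab : b = a) :
    HasSum g b := by
  have : g = f := funext hf
  rw [this, hab]; exact h

noncomputable def PP (x : ℝ) : ℕ → ℝ
  | 0 => 1
  | m + 1 => PP x m * ((x + m) / (1 - x + m))

lemma PP_abs {x : ℝ} (hx : x ≤ 1/2) (m : ℕ) : |PP x m| ≤ 1 := by
  induction m with
  | zero => simp [PP]
  | succ m ih =>
    have hm : (0:ℝ) ≤ m := Nat.cast_nonneg m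
    have hd : 0 < 1 - x + m := by linarith
    rw [PP, abs_mul, abs_div, abs_of_pos hd]
    have h2 : |x + m| / (1 - x + m) ≤ 1 := by
      rw [div_le_one hd, abs_le]; constructor <;> linarith
    exact mul_le_one₀ ih (by positivity) h2

lemma PP_shift {x : ℝ} (hx : x ≤ 1/2) (m : ℕ) :
    PP x m = PP (x - 1) m * (1 - (m:ℝ)^2 / (1 - x)^2) := by
  induction m with
  | zero => simp [PP]
  | succ m ih =>
    have hm : (0:ℝ) ≤ m := Nat.cast_nonneg m
    have h1 : 1 - x + m ≠ 0 := by linarith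
    have h2 : 1 - (x - 1) + m ≠ 0 := by linarith
    have h3 : 1 - x ≠ 0 := by linarith
    rw [PP, PP, ih]
    push_cast
    field_simp
    ring

lemma PP_zero (m : ℕ) : PP 0 (m+1) = 0 := by
  induction m with
  | zero => simp [PP]
  | succ m ih => rw [PP, ih, zero_mul]

lemma PP_hasSum {x : ℝ} (hx : x ≤ -(1/2)) : HasSum (fun m => PP x (m+1)) (-(1/2)) := by
  set u : ℕ → ℝ := fun m => ((m:ℝ) - x) * PP x m with hu
  have hstep : ∀ m, u (m+1) = ((m:ℝ) + x) * PP x m := by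
    intro m
    have hm : (0:ℝ) ≤ m := Nat.cast_nonneg m
    have h1 : 1 - x + m ≠ 0 := by linarith
    simp only [hu, PP]
    push_cast
    field_simp
    ring
  have hdiff : ∀ m, u (m+1) - u m = 2 * x * PP x m := by
    intro m; rw [hstep]; simp only [hu]; ring
  obtain ⟨M, hM⟩ := exists_nat_ge (-x)
  -- bound
  have hb : ∀ j, |u (M + j)| * ((M + j : ℕ) : ℝ) ≤ |u M| * M := by
    intro j
    induction j with
    | zero => simp
    | succ j ih =>
      refine le_trans ?_ ih
      have hm : (M:ℝ) ≤ ((M + j : ℕ):ℝ) := by exact_mod_cast Nat.le_add_right M j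
      set m := M + j with hmdef
      have hmx : 0 ≤ (m:ℝ) + x := by linarith
      have hmx' : 0 < (m:ℝ) - x := by linarith
      rw [show M + (j+1) = m + 1 by omega, hstep, abs_mul, abs_of_nonneg hmx]
      simp only [hu]
      rw [abs_mul, abs_of_pos hmx']
      have := abs_nonneg (PP x m)
      push_cast
      nlinarith [mul_nonneg this (show 0 ≤ (m - x) * m - (m+x)*(m+1) by nlinarith)]
  set C := |u M| * M
  have hb2 : ∀ m ≥ M, |u m| * (m:ℝ) ≤ C := by
    intro m hm
    obtain ⟨j, rfl⟩ := Nat.exists_eq_add_of_le hm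
    exact hb j
  have hC : 0 ≤ C := by positivity
  have hu0 : Tendsto u atTop (𝓝 0) := by
    have h1 : Tendsto (fun m : ℕ => C / (m:ℝ)) atTop (𝓝 0) := tendsto_const_div_atTop_nhds_zero_nat C
    apply squeeze_zero_norm' _ h1
    filter_upwards [eventually_ge_atTop M, eventually_gt_atTop 0] with m hm hm0
    rw [le_div_iff₀ (by exact_mod_cast hm0), Real.norm_eq_abs]
    exact hb2 m hm
  have hsum : Summable (fun m => PP x m) := by
    have h2 : Summable (fun m : ℕ => C * (1 / (m:ℝ)^2)) :=
      (Real.summable_one_div_nat_pow.mpr (by norm_num)).mul_left C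
    apply Summable.of_norm_bounded_eventually_nat h2
    filter_upwards [eventually_ge_atTop M, eventually_gt_atTop 0] with m hm hm0
    have hm0' : (0:ℝ) < m := by exact_mod_cast hm0
    have := hb2 m hm
    simp only [hu] at this
    rw [abs_mul, abs_of_pos (by linarith)] at this
    rw [Real.norm_eq_abs, mul_one_div, le_div_iff₀ (by positivity)]
    refine le_trans ?_ this
    have := abs_nonneg (PP x m)
    nlinarith [mul_nonneg (mul_nonneg this hm0'.le) (show 0 ≤ -x by linarith)]
  have hs2 : HasSum (fun m => PP x m) (1/2) := by
    rw [hsum.hasSum_iff_tendsto_nat]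
    have h3 : ∀ n, ∑ i ∈ Finset.range n, PP x i = (u n - u 0) / (2 * x) := by
      intro n
      rw [← Finset.sum_range_sub, Finset.sum_div]
      apply Finset.sum_congr rfl
      intro i _
      rw [hdiff]
      have : x ≠ 0 := by linarith
      field_simp
    simp_rw [h3]
    have h4 : (1/2 : ℝ) = (0 - u 0) / (2 * x) := by
      have : x ≠ 0 := by linarith
      simp [hu, PP]; field_simp
    rw [h4]
    exact (hu0.sub_const _).div_const _
  have := (hasSum_nat_add_iff' 1).mpr hs2
  exact hs_congr this (fun _ => rfl) (by simp [PP]; norm_num)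

noncomputable def A1 (x : ℝ) : ℝ := ∑' m : ℕ, PP x (m+1) / ((m:ℝ)+1)^2
noncomputable def A2 (x : ℝ) : ℝ := ∑' m : ℕ, PP x (m+1) / ((m:ℝ)+1)^4
noncomputable def a1 : ℝ := ∑' m : ℕ, (-1:ℝ)^(m+1) / ((m:ℝ)+1)^2
noncomputable def a2 : ℝ := ∑' m : ℕ, (-1:ℝ)^(m+1) / ((m:ℝ)+1)^4

lemma summ_inv (p : ℕ) (hp : 2 ≤ p) : Summable (fun m : ℕ => 1 / ((m:ℝ)+1)^p) := by
  have := (summable_nat_add_iff 1).mpr (Real.summable_one_div_nat_pow.mpr (show 1 < p by omega))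
  simpa using this

lemma PPdiv_norm {x : ℝ} (hx : x ≤ 1/2) (p m : ℕ) :
    ‖PP x (m+1) / ((m:ℝ)+1)^p‖ ≤ 1 / ((m:ℝ)+1)^p := by
  rw [norm_div, Real.norm_eq_abs, Real.norm_of_nonneg (by positivity : (0:ℝ) ≤ ((m:ℝ)+1)^p)]
  gcongr
  exact PP_abs hx _

lemma PP_summable {x : ℝ} (hx : x ≤ 1/2) (p : ℕ) (hp : 2 ≤ p) :
    Summable (fun m : ℕ => PP x (m+1) / ((m:ℝ)+1)^p) :=
  Summable.of_norm_bounded (summ_inv p hp) (PPdiv_norm hx p)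

lemma A1_rec {x : ℝ} (hx : x ≤ 1/2) : A1 x = A1 (x-1) + 1 / (2 * (1-x)^2) := by
  have h1 := (PP_summable (x := x - 1) (by linarith) 2 le_rfl).hasSum
  have h2 := (PP_hasSum (x := x - 1) (by linarith)).mul_left (1/(1-x)^2)
  have h3 := h1.sub h2
  have h5 : 1 - x ≠ 0 := by linarith
  refine HasSum.tsum_eq (hs_congr h3 ?_ ?_)
  · intro m
    rw [PP_shift hx]
    have : (m:ℝ) + 1 ≠ 0 := by positivity
    push_cast
    field_simp
  · rw [A1]
    field_simp
    ring

lemma A2_rec {x : ℝ} (hx : x ≤ 1/2) : A2 x = A2 (x-1) - A1 (x-1) / (1-x)^2 := by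
  have h1 := (PP_summable (x := x - 1) (by linarith) 4 (by norm_num)).hasSum
  have h2 := ((PP_summable (x := x - 1) (by linarith) 2 (by norm_num)).hasSum).div_const ((1-x)^2)
  refine HasSum.tsum_eq (hs_congr (h1.sub h2) ?_ rfl)
  intro m
  rw [PP_shift hx]
  have h3 : 1 - x ≠ 0 := by linarith
  have : (m:ℝ) + 1 ≠ 0 := by positivity
  push_cast
  field_simp

lemma PP_lim (x : ℝ) (m : ℕ) : Tendsto (fun N : ℕ => PP (x - N) m) atTop (𝓝 ((-1)^m)) := by
  induction m with
  | zero => simp [PP]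
  | succ m ih =>
    simp only [PP, pow_succ]
    refine ih.mul ?_
    have h1 : Tendsto (fun N : ℕ => 1 - x + N + m) atTop atTop := by
      refine Tendsto.atTop_add (tendsto_atTop_add_const_left _ _ tendsto_natCast_atTop_atTop) tendsto_const_nhds
    have h2 : Tendsto (fun N : ℕ => -1 + (1 + 2 * m) / (1 - x + N + m)) atTop (𝓝 (-1 + 0)) :=
      tendsto_const_nhds.add (h1.const_div_atTop _)
    rw [add_zero] at h2
    refine h2.congr' ?_
    filter_upwards [h1.eventually_gt_atTop 0] with N hN
    have : 1 - (x - N) + m ≠ 0 := by linarith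
    have : 1 - x + N + m ≠ 0 := by linarith
    rw [show 1 - (x - N) + m = 1 - x + N + m by ring]
    field_simp
    ring

lemma lim_gen {x : ℝ} (hx : x ≤ 1/2) (p : ℕ) (hp : 2 ≤ p) :
    Tendsto (fun N : ℕ => ∑' m : ℕ, PP (x - N) (m+1) / ((m:ℝ)+1)^p) atTop
      (𝓝 (∑' m : ℕ, (-1:ℝ)^(m+1) / ((m:ℝ)+1)^p)) := by
  apply tendsto_tsum_of_dominated_convergence (summ_inv p hp)
  · intro m
    exact (PP_lim x (m+1)).div_const _
  · refine Eventually.of_forall fun N m => PPdiv_norm ?_ p m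
    have : (0:ℝ) ≤ N := Nat.cast_nonneg N
    linarith

lemma A1_part {x : ℝ} (hx : x ≤ 1/2) (N : ℕ) :
    ∑ k ∈ Finset.range N, 1 / ((k:ℝ)+1-x)^2 = 2 * (A1 x - A1 (x - N)) := by
  induction N with
  | zero => simp
  | succ N ih =>
    have : (0:ℝ) ≤ N := Nat.cast_nonneg N
    rw [Finset.sum_range_succ, ih, A1_rec (x := x - N) (by linarith)]
    push_cast
    rw [show x - (N + 1) = x - N - 1 by ring, show 1 - (x - N) = N + 1 - x by ring]
    have : (N:ℝ) + 1 - x ≠ 0 := by linarith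
    field_simp
    ring

lemma A2_part {x : ℝ} (hx : x ≤ 1/2) (N : ℕ) :
    ∑ k ∈ Finset.range N, A1 (x - (k+1)) / ((k:ℝ)+1-x)^2 = A2 (x - N) - A2 x := by
  induction N with
  | zero => simp
  | succ N ih =>
    have : (0:ℝ) ≤ N := Nat.cast_nonneg N
    rw [Finset.sum_range_succ, ih, A2_rec (x := x - N) (by linarith)]
    push_cast
    rw [show x - (N + 1) = x - N - 1 by ring, show 1 - (x - N) = N + 1 - x by ring]
    ring

lemma A1_hasSum {x : ℝ} (hx : x ≤ 1/2) :
    HasSum (fun k : ℕ => 1 / ((k:ℝ)+1-x)^2) (2 * (A1 x - a1)) := by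
  rw [hasSum_iff_tendsto_nat_of_nonneg (fun k => by positivity)]
  simp_rw [A1_part hx]
  exact ((lim_gen hx 2 le_rfl).const_sub _).const_mul _

noncomputable def SS (x : ℝ) : ℝ := ∑' k : ℕ, 1 / ((k:ℝ)+1-x)^2

lemma SS_summable {x : ℝ} (hx : x ≤ 1/2) : Summable (fun k : ℕ => 1 / ((k:ℝ)+1-x)^2) :=
  (A1_hasSum hx).summable

lemma A1_eq {x : ℝ} (hx : x ≤ 1/2) : A1 x = (SS x - SS 0) / 2 := by
  have h1 : SS x = 2 * (A1 x - a1) := (A1_hasSum hx).tsum_eq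
  have h2 : SS 0 = 2 * (A1 0 - a1) := (A1_hasSum (by norm_num)).tsum_eq
  have h3 : A1 0 = 0 := by simp [A1, PP_zero]
  rw [h3] at h2
  linarith

lemma A2_zero : A2 0 = 0 := by simp [A2, PP_zero]

lemma A1_bound {x : ℝ} (hx : x ≤ 1/2) : |A1 x| ≤ ∑' m : ℕ, 1 / ((m:ℝ)+1)^2 :=
  tsum_of_norm_bounded (summ_inv 2 le_rfl).hasSum (PPdiv_norm hx 2)

lemma A2_hasSum {x : ℝ} (hx : x ≤ 1/2) :
    HasSum (fun k : ℕ => A1 (x - (k+1)) / ((k:ℝ)+1-x)^2) (a2 - A2 x) := by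
  have hs : Summable (fun k : ℕ => A1 (x - (k+1)) / ((k:ℝ)+1-x)^2) := by
    refine Summable.of_norm_bounded ((SS_summable hx).mul_left (∑' m : ℕ, 1 / ((m:ℝ)+1)^2)) ?_
    intro k
    have : (0:ℝ) ≤ k := Nat.cast_nonneg k
    rw [norm_div, mul_one_div, Real.norm_of_nonneg (by positivity : 0 ≤ ((k:ℝ)+1-x)^2)]
    gcongr
    exact A1_bound (by linarith)
  rw [hs.hasSum_iff_tendsto_nat]
  simp_rw [A2_part hx]
  exact (lim_gen hx 4 (by norm_num)).sub_const _

open Filter Topology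

noncomputable def UU (x : ℝ) : ℝ :=
  ∑' n : ℕ, 1 / ((n:ℝ)+1)^3 * ∑ k ∈ Finset.range (n+1), 1 / ((k:ℝ)+1-x)
noncomputable def TT (x : ℝ) : ℝ :=
  ∑' n : ℕ, ∑' k : ℕ, 1 / (((n:ℝ)+1)^2 * ((n:ℝ)+k+2-x)^2)

lemma tele_hasSum {x : ℝ} (hx : x ≤ 1/2) (n : ℕ) :
    HasSum (fun k : ℕ => 1 / ((k:ℝ)+1-x) - 1 / ((n:ℝ)+k+2-x))
      (∑ k ∈ Finset.range (n+1), 1 / ((k:ℝ)+1-x)) := by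
  set a : ℕ → ℝ := fun k => 1 / ((k:ℝ)+1-x) with ha
  have ha0 : Tendsto a atTop (𝓝 0) := by
    have h1 : Tendsto (fun k : ℕ => (k:ℝ) + (1 - x)) atTop atTop :=
      tendsto_atTop_add_const_right _ _ tendsto_natCast_atTop_atTop
    refine (h1.const_div_atTop 1).congr fun k => ?_
    simp only [ha]; congr 1; ring
  have hc : ∀ k : ℕ, 1 / ((n:ℝ)+k+2-x) = a (n + 1 + k) := by
    intro k; simp only [ha]; push_cast; congr 1; ring
  simp_rw [hc]
  rw [hasSum_iff_tendsto_nat_of_nonneg]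
  · have hp : ∀ N, ∑ k ∈ Finset.range N, (a k - a (n + 1 + k)) =
        ∑ k ∈ Finset.range (n+1), a k - ∑ k ∈ Finset.range (n+1), a (N + k) := by
      intro N
      have e1 := Finset.sum_range_add a N (n+1)
      have e2 := Finset.sum_range_add a (n+1) N
      rw [add_comm N (n+1), e2] at e1
      rw [Finset.sum_sub_distrib]
      linarith
    have h3 : Tendsto (fun N => ∑ k ∈ Finset.range (n+1), a (N + k)) atTop
        (𝓝 (∑ k ∈ Finset.range (n+1), (0:ℝ))) := by
      apply tendsto_finsetSum
      intro k _
      exact ha0.comp (tendsto_add_atTop_nat k)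
    refine Tendsto.congr (fun N => (hp N).symm) ?_
    simpa using h3.const_sub (∑ k ∈ Finset.range (n+1), a k)
  · intro k
    have hk : (0:ℝ) ≤ k := Nat.cast_nonneg k
    have hn : (0:ℝ) ≤ n := Nat.cast_nonneg n
    simp only [ha, sub_nonneg]
    push_cast
    apply one_div_le_one_div_of_le <;> linarith

section
variable (x : ℝ)
noncomputable def gg (p : ℕ × ℕ) : ℝ := 1 / ((p.1:ℝ)+1-x)^2 * (1 / ((p.2:ℝ)+1)^2)
noncomputable def f1 (p : ℕ × ℕ) : ℝ := 1 / (((p.1:ℝ)+1-x)^2 * ((p.2:ℝ)+p.1+2-x)^2)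
noncomputable def f2 (p : ℕ × ℕ) : ℝ := 1 / (((p.2:ℝ)+1)^2 * ((p.2:ℝ)+p.1+2-x)^2)
noncomputable def f3 (p : ℕ × ℕ) : ℝ :=
  1 / ((p.2:ℝ)+1)^3 * (1 / ((p.1:ℝ)+1-x) - 1 / ((p.2:ℝ)+p.1+2-x))
end

lemma pf {x : ℝ} (hx : x ≤ 1/2) (p : ℕ × ℕ) : f3 x p = (gg x p + f2 x p - f1 x p) / 2 := by
  obtain ⟨k, n⟩ := p
  simp only [f1, f2, f3, gg]
  have hk : (0:ℝ) ≤ k := Nat.cast_nonneg k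
  have hn : (0:ℝ) ≤ n := Nat.cast_nonneg n
  have h1 : (k:ℝ)+1-x ≠ 0 := by linarith
  have h2 : (n:ℝ)+k+2-x ≠ 0 := by linarith
  have h3 : (n:ℝ)+1 ≠ 0 := by linarith
  field_simp
  ring

lemma gg_summable {x : ℝ} (hx : x ≤ 1/2) : Summable (gg x) :=
  (SS_summable hx).mul_of_nonneg (summ_inv 2 le_rfl) (fun k => by positivity) (fun k => by positivity)

lemma f1_summable {x : ℝ} (hx : x ≤ 1/2) : Summable (f1 x) := by
  refine Summable.of_nonneg_of_le (fun p => by unfold f1; positivity) (fun p => ?_) (gg_summable hx)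
  obtain ⟨k, n⟩ := p
  simp only [f1, gg]
  have hk : (0:ℝ) ≤ k := Nat.cast_nonneg k
  have hn : (0:ℝ) ≤ n := Nat.cast_nonneg n
  have h1 : 0 < (k:ℝ)+1-x := by linarith
  rw [one_div_mul_one_div]
  apply one_div_le_one_div_of_le (by positivity)
  gcongr ?_ * ?_ ^ 2
  linarith

lemma f2_summable {x : ℝ} (hx : x ≤ 1/2) : Summable (f2 x) := by
  refine Summable.of_nonneg_of_le (fun p => by unfold f2; positivity) (fun p => ?_) (gg_summable hx)
  obtain ⟨k, n⟩ := p
  simp only [f2, gg]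
  have hk : (0:ℝ) ≤ k := Nat.cast_nonneg k
  have hn : (0:ℝ) ≤ n := Nat.cast_nonneg n
  have h1 : 0 < (k:ℝ)+1-x := by linarith
  rw [one_div_mul_one_div, mul_comm]
  apply one_div_le_one_div_of_le (by positivity)
  gcongr ?_ ^ 2 * _
  linarith

lemma f3_summable {x : ℝ} (hx : x ≤ 1/2) : Summable (f3 x) := by
  rw [show f3 x = _ from funext (pf hx)]
  exact (((gg_summable hx).add (f2_summable hx)).sub (f1_summable hx)).div_const 2

lemma gg_tsum {x : ℝ} (hx : x ≤ 1/2) : ∑' p, gg x p = SS x * SS 0 := by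
  rw [(gg_summable hx).tsum_prod]
  simp only [gg, tsum_mul_left, tsum_mul_right]
  simp [SS]

lemma f2_tsum {x : ℝ} (hx : x ≤ 1/2) : ∑' p, f2 x p = TT x := by
  have h := (f2_summable hx).tsum_prod
  have h2 : Summable (Function.uncurry fun k n : ℕ => f2 x (k, n)) := f2_summable hx
  have h3 := h2.tsum_comm
  rw [h, ← h3]
  rfl

lemma f3_swap {x : ℝ} (hx : x ≤ 1/2) : HasSum (fun p : ℕ × ℕ => f3 x (p.2, p.1)) (∑' p, f3 x p) := by
  have := (Equiv.prodComm ℕ ℕ).hasSum_iff.mpr (f3_summable hx).hasSum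
  exact this

lemma UU_hasSum {x : ℝ} (hx : x ≤ 1/2) :
    HasSum (fun n : ℕ => 1 / ((n:ℝ)+1)^3 * ∑ k ∈ Finset.range (n+1), 1 / ((k:ℝ)+1-x))
     (∑' p, f3 x p) := by
  refine (f3_swap hx).prod_fiberwise fun n => ?_
  exact (tele_hasSum hx n).mul_left _

lemma f1_tsum {x : ℝ} (hx : x ≤ 1/2) :
    ∑' p, f1 x p = ∑' k : ℕ, SS (x - (k+1)) / ((k:ℝ)+1-x)^2 := by
  rw [(f1_summable hx).tsum_prod]
  refine tsum_congr fun k => ?_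
  rw [SS, ← tsum_div_const]
  refine tsum_congr fun n => ?_
  simp only [f1]
  rw [div_div]
  congr 1
  ring

lemma A2_eq_aux {x : ℝ} (hx : x ≤ 1/2) : A2 x = a2 - TT x / 2 + UU x := by
  have h1 := A2_hasSum hx
  have h2 : HasSum (fun k : ℕ => SS (x - (k+1)) / ((k:ℝ)+1-x)^2)
      (2 * (a2 - A2 x) + SS 0 * SS x) := by
    refine hs_congr ((h1.mul_left 2).add ((SS_summable hx).hasSum.mul_left (SS 0))) ?_ rfl
    intro k
    have hk : (0:ℝ) ≤ k := Nat.cast_nonneg k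
    rw [A1_eq (by linarith)]
    have h1 : (k:ℝ)+1-x ≠ 0 := by linarith
    field_simp
    ring
  have h3 : ∑' p, f3 x p = (∑' p, gg x p + ∑' p, f2 x p - ∑' p, f1 x p) / 2 := by
    rw [show f3 x = _ from funext (pf hx)]
    exact ((((gg_summable hx).hasSum.add (f2_summable hx).hasSum).sub
      (f1_summable hx).hasSum).div_const 2).tsum_eq
  have h4 : UU x = ∑' p, f3 x p := (UU_hasSum hx).tsum_eq
  rw [← h4, gg_tsum hx, f2_tsum hx, f1_tsum hx, h2.tsum_eq] at h3
  linarith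

lemma A2_eq {x : ℝ} (hx : x ≤ 1/2) : A2 x = (UU x - UU 0) - (TT x - TT 0) / 2 := by
  have h1 := A2_eq_aux hx
  have h2 := A2_eq_aux (x := 0) (by norm_num)
  rw [A2_zero] at h2
  linarith

open Filter Topology

noncomputable def BB (x : ℝ) : ℕ → ℕ → ℝ
  | 0, _ => 1
  | m + 1, n => BB x m n * (((m:ℝ) + 1) / ((n:ℝ) + 1 + m - x))

noncomputable def RR (c : ℝ) : ℕ → ℝ
  | 0 => 1
  | m + 1 => RR c m * ((c + m) / ((m:ℝ) + 1))

noncomputable def QQ (c x : ℝ) (n : ℕ) : ℕ → ℝ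
  | 0 => 1
  | m + 1 => QQ c x n m * ((c + m) / ((n:ℝ) + 1 + m - x))

lemma RR_BB {x : ℝ} (hx : x ≤ 1/4) (c : ℝ) (n m : ℕ) : RR c m * BB x m n = QQ c x n m := by
  induction m with
  | zero => simp [RR, BB, QQ]
  | succ m ih =>
    have hm : (0:ℝ) ≤ m := Nat.cast_nonneg m
    have hn : (0:ℝ) ≤ n := Nat.cast_nonneg n
    have h1 : (m:ℝ) + 1 ≠ 0 := by linarith
    have h2 : (n:ℝ) + 1 + m - x ≠ 0 := by linarith
    rw [QQ, ← ih, RR, BB]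
    field_simp

lemma BB_pos {x : ℝ} (hx : x ≤ 1/4) (m n : ℕ) : 0 < BB x m n := by
  induction m with
  | zero => simp [BB]
  | succ m ih =>
    have hm : (0:ℝ) ≤ m := Nat.cast_nonneg m
    have hn : (0:ℝ) ≤ n := Nat.cast_nonneg n
    have h2 : 0 < (n:ℝ) + 1 + m - x := by linarith
    rw [BB]; positivity

lemma BB_shift {x : ℝ} (hx : x ≤ 1/4) (m n : ℕ) :
    BB x m n * ((n:ℝ) + 1 - x) = BB x m (n+1) * ((n:ℝ) + 1 + m - x) := by
  induction m with
  | zero => simp [BB]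
  | succ m ih =>
    have hm : (0:ℝ) ≤ m := Nat.cast_nonneg m
    have hn : (0:ℝ) ≤ n := Nat.cast_nonneg n
    have h2 : (n:ℝ) + 1 + m - x ≠ 0 := by linarith
    have h3 : (n:ℝ) + 1 + 1 + m - x ≠ 0 := by linarith
    have h4 : (n:ℝ) + 1 + (m + 1) - x ≠ 0 := by linarith
    rw [BB, BB]
    push_cast
    rw [show (n:ℝ) + 1 + 1 + m - x = (n:ℝ) + 1 + (m + 1) - x by ring]
    field_simp
    linear_combination ih

lemma BB_tendsto (x : ℝ) (m : ℕ) : Tendsto (BB x (m+1)) atTop (𝓝 0) := by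
  have key : ∀ m : ℕ, ∀ L, Tendsto (BB x m) atTop (𝓝 L) → Tendsto (BB x (m+1)) atTop (𝓝 0) := by
    intro m L h
    have h1 : Tendsto (fun n : ℕ => (n:ℝ) + (1 + m - x)) atTop atTop :=
      tendsto_atTop_add_const_right _ _ tendsto_natCast_atTop_atTop
    have h2 := h.mul (h1.const_div_atTop ((m:ℝ)+1))
    rw [mul_zero] at h2
    refine h2.congr fun n => ?_
    rw [BB]
    congr 2
    ring
  induction m with
  | zero =>
    apply key 0 1
    have : BB x 0 = fun _ => 1 := by funext n; simp [BB]
    rw [this]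
    exact tendsto_const_nhds
  | succ m ih => exact key _ 0 ih

lemma BB_tail {x : ℝ} (hx : x ≤ 1/4) (m n : ℕ) :
    HasSum (fun j : ℕ => BB x (m+1) (n+1+j) * (1 / (((n+1+j : ℕ) : ℝ) - x)))
      (BB x (m+1) n * (1 / ((m+1 : ℕ) : ℝ))) := by
  have hpos : ∀ j : ℕ, 0 < ((n+1+j : ℕ) : ℝ) - x := by
    intro j
    have hj : (0:ℝ) ≤ j := Nat.cast_nonneg j
    have hn : (0:ℝ) ≤ n := Nat.cast_nonneg n
    push_cast; linarith
  have hm : (0:ℝ) ≤ m := Nat.cast_nonneg m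
  rw [hasSum_iff_tendsto_nat_of_nonneg]
  · have hp : ∀ N, ∑ j ∈ Finset.range N, BB x (m+1) (n+1+j) * (1 / (((n+1+j : ℕ) : ℝ) - x))
        = (BB x (m+1) n - BB x (m+1) (N + n)) * (1 / ((m+1 : ℕ) : ℝ)) := by
      intro N
      induction N with
      | zero => simp
      | succ N ih =>
        rw [Finset.sum_range_succ, ih]
        have h := BB_shift hx (m+1) (N+n)
        have h1 := (hpos N).ne'
        rw [show N + 1 + n = N + n + 1 by ring, show n + 1 + N = N + n + 1 by ring] at *
        push_cast at h h1 ⊢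
        have h2 : (m:ℝ) + 1 ≠ 0 := by linarith
        field_simp
        linear_combination -h
    refine Tendsto.congr (fun N => (hp N).symm) ?_
    have := (((BB_tendsto x m).comp (tendsto_add_atTop_nat n)).const_sub (BB x (m+1) n)).mul_const
      (1 / ((m+1 : ℕ) : ℝ))
    rw [sub_zero] at this
    exact this
  · intro j
    have := (BB_pos hx (m+1) (n+1+j)).le
    have := (hpos j).le
    positivity

lemma QQ_tendsto {c x : ℝ} (hc : |c| ≤ 1/4) (hx : x ≤ 1/4) (n : ℕ) (hn : 1 ≤ n)
    (hcn : 0 < (n:ℝ) - x - c) :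
    Tendsto (fun N => ∑ m ∈ Finset.range N, QQ c x n m) atTop
      (𝓝 (((n:ℝ) - x) / ((n:ℝ) - x - c))) := by
  have hn' : (1:ℝ) ≤ n := by exact_mod_cast hn
  have ⟨hc1, hc2⟩ := abs_le.mp hc
  set v : ℕ → ℝ := fun m => ((m:ℝ) + n - x) * QQ c x n m with hv
  have hstep : ∀ m, v (m+1) = ((m:ℝ) + c) * QQ c x n m := by
    intro m
    have hm : (0:ℝ) ≤ m := Nat.cast_nonneg m
    have h1 : (n:ℝ) + 1 + m - x ≠ 0 := by linarith
    simp only [hv, QQ]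
    push_cast
    field_simp
    ring
  have hdiff : ∀ m, v m - v (m+1) = ((n:ℝ) - x - c) * QQ c x n m := by
    intro m; rw [hstep]; simp only [hv]; ring
  have hb : ∀ m : ℕ, v m ^ 2 * ((m:ℝ) + 1) ≤ v 0 ^ 2 := by
    intro m
    induction m with
    | zero => simp
    | succ m ih =>
      refine le_trans ?_ ih
      have hm : (0:ℝ) ≤ m := Nat.cast_nonneg m
      rw [hstep]
      simp only [hv]
      have h1 : ((m:ℝ) + c)^2 ≤ (m + 1/4)^2 := by
        apply sq_le_sq'  <;> linarith
      have h2 : ((m:ℝ) + 3/4)^2 ≤ (m + n - x)^2 := by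
        apply pow_le_pow_left₀ <;> linarith
      have h3 : ((m:ℝ) + c)^2 * (m + 1 + 1) ≤ (m + n - x)^2 * (m + 1) := by
        calc ((m:ℝ) + c)^2 * (m + 1 + 1) ≤ ((m:ℝ) + 1/4)^2 * ((m:ℝ) + 1 + 1) := by gcongr
          _ ≤ ((m:ℝ) + 3/4)^2 * ((m:ℝ) + 1) := by nlinarith
          _ ≤ _ := by gcongr
      push_cast
      nlinarith [mul_le_mul_of_nonneg_left h3 (sq_nonneg (QQ c x n m))]
  have hv0 : Tendsto v atTop (𝓝 0) := by
    have h1 : Tendsto (fun m : ℕ => v 0 ^ 2 / ((m:ℝ) + 1)) atTop (𝓝 0) :=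
      (tendsto_atTop_add_const_right _ _ tendsto_natCast_atTop_atTop).const_div_atTop _
    have h2 : Tendsto (fun m => v m ^ 2) atTop (𝓝 0) := by
      refine squeeze_zero (fun m => sq_nonneg _) (fun m => ?_) h1
      rw [le_div_iff₀ (by positivity)]
      exact hb m
    have h3 := (Real.continuous_sqrt.tendsto 0).comp h2
    simp only [Real.sqrt_zero] at h3
    rw [tendsto_zero_iff_abs_tendsto_zero]
    refine h3.congr fun m => ?_
    simp [Real.sqrt_sq_eq_abs]
  have hp : ∀ N, ∑ m ∈ Finset.range N, QQ c x n m = (v 0 - v N) / ((n:ℝ) - x - c) := by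
    intro N
    rw [← Finset.sum_range_sub', Finset.sum_div]
    refine Finset.sum_congr rfl fun m _ => ?_
    rw [hdiff]
    field_simp
  refine Tendsto.congr (fun N => (hp N).symm) ?_
  have := (hv0.const_sub (v 0)).div_const ((n:ℝ) - x - c)
  convert this using 2
  simp [hv, QQ]

noncomputable def ff (x : ℝ) (m : ℕ) : ℝ := RR x (m+1) - RR (-x) (m+1)

lemma RR_nonneg {x : ℝ} (hx : 0 ≤ x) (m : ℕ) : 0 ≤ RR x m := by
  induction m with
  | zero => simp [RR]
  | succ m ih => rw [RR]; positivity

lemma RR_nonpos {x : ℝ} (hx : 0 ≤ x) (hx' : x ≤ 1/4) (m : ℕ) : RR (-x) (m+1) ≤ 0 := by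
  induction m with
  | zero => simp [RR]; exact hx
  | succ m ih =>
    rw [RR]
    have hm : (0:ℝ) ≤ m := Nat.cast_nonneg m
    refine mul_nonpos_of_nonpos_of_nonneg ih ?_
    push_cast
    apply div_nonneg <;> linarith

lemma ff_nonneg {x : ℝ} (hx : 0 ≤ x) (hx' : x ≤ 1/4) (m : ℕ) : 0 ≤ ff x m := by
  have := RR_nonneg hx (m+1)
  have := RR_nonpos hx hx' m
  unfold ff; linarith

lemma ff_hasSum {x : ℝ} (hx : 0 ≤ x) (hx' : x ≤ 1/4) (n : ℕ) (hn : 1 ≤ n) :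
    HasSum (fun m => ff x m * BB x (m+1) n) (2 * x * ((n:ℝ) - x) / (n * (n - 2 * x))) := by
  have hn' : (1:ℝ) ≤ n := by exact_mod_cast hn
  rw [hasSum_iff_tendsto_nat_of_nonneg
    (fun m => mul_nonneg (ff_nonneg hx hx' m) (BB_pos hx' _ _).le)]
  have h1 := QQ_tendsto (c := x) (x := x) (by rw [abs_of_nonneg hx]; exact hx') hx' n hn (by linarith)
  have h2 := QQ_tendsto (c := -x) (x := x) (by rw [abs_neg, abs_of_nonneg hx]; exact hx') hx' n hn
    (by linarith)
  have h3 := (h1.sub h2).comp (tendsto_add_atTop_nat 1)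
  have e : 2 * x * ((n:ℝ) - x) / (n * (n - 2 * x)) =
      ((n:ℝ) - x) / ((n:ℝ) - x - x) - ((n:ℝ) - x) / ((n:ℝ) - x - -x) := by
    have e1 : (n:ℝ) - 2 * x ≠ 0 := by linarith
    have e2 : (n:ℝ) ≠ 0 := by linarith
    rw [show (n:ℝ) - x - x = n - 2 * x by ring, show (n:ℝ) - x - -x = n by ring]
    field_simp
    ring
  rw [e]
  refine h3.congr fun N => ?_
  simp only [Function.comp]
  rw [← Finset.sum_sub_distrib, Finset.sum_range_succ']
  simp only [QQ, sub_self, add_zero]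
  refine Finset.sum_congr rfl fun m _ => ?_
  rw [ff, sub_mul, RR_BB hx', RR_BB hx', QQ, QQ]

lemma QQ_PP (x : ℝ) (m : ℕ) : QQ x x 0 m = PP x m := by
  induction m with
  | zero => simp [QQ, PP]
  | succ m ih => rw [QQ, PP, ih]; congr 2; push_cast; ring

lemma QQ_neg {x : ℝ} (hx' : x ≤ 1/4) (m : ℕ) : QQ (-x) x 0 (m+1) = -x / ((m:ℝ) + 1 - x) := by
  induction m with
  | zero => simp [QQ]
  | succ m ih =>
    rw [QQ, ih]
    have hm : (0:ℝ) ≤ m := Nat.cast_nonneg m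
    have h1 : (m:ℝ) + 1 - x ≠ 0 := by linarith
    have h2 : (m:ℝ) + 1 + 1 - x ≠ 0 := by linarith
    push_cast
    rw [show (0:ℝ) + 1 + (m + 1) - x = (m:ℝ) + 1 + 1 - x by ring]
    field_simp
    ring

lemma ff_zero {x : ℝ} (hx' : x ≤ 1/4) (m : ℕ) :
    ff x m * BB x (m+1) 0 = PP x (m+1) + x / ((m:ℝ) + 1 - x) := by
  rw [ff, sub_mul, RR_BB hx', RR_BB hx', QQ_PP, QQ_neg hx']
  ring

open ENNReal

lemma ofReal_tsum_hs {f : ℕ → ℝ} {a : ℝ} (hf : ∀ n, 0 ≤ f n) (h : HasSum f a) :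
    ∑' n, ENNReal.ofReal (f n) = ENNReal.ofReal a := by
  rw [← h.tsum_eq, ENNReal.ofReal_tsum_of_nonneg hf h.summable]

noncomputable def rr (x : ℝ) (k : ℕ) : ℝ≥0∞ := ENNReal.ofReal (1 / ((k:ℝ) - x))
noncomputable def hh (x : ℝ) (k : ℕ) : ℝ≥0∞ := ENNReal.ofReal (2 * x / ((k:ℝ) * (k - 2 * x)))
noncomputable def JJ (x : ℝ) (p n : ℕ) : ℝ≥0∞ := ∑' m : ℕ,
  ENNReal.ofReal (ff x m) * ENNReal.ofReal (BB x (m+1) n) * ENNReal.ofReal (1 / ((m+1 : ℕ):ℝ)) ^ p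

lemma BB_tail_enn {x : ℝ} (hx : x ≤ 1/4) (m n : ℕ) :
    ∑' j : ℕ, ENNReal.ofReal (BB x (m+1) (n+1+j)) * rr x (n+1+j) =
      ENNReal.ofReal (BB x (m+1) n) * ENNReal.ofReal (1 / ((m+1 : ℕ):ℝ)) := by
  have hpos : ∀ j : ℕ, 0 < ((n+1+j : ℕ) : ℝ) - x := by
    intro j
    have hj : (0:ℝ) ≤ j := Nat.cast_nonneg j
    have hn : (0:ℝ) ≤ n := Nat.cast_nonneg n
    push_cast; linarith
  simp only [rr]
  rw [← ENNReal.ofReal_mul (BB_pos hx _ _).le, ← ofReal_tsum_hs _ (BB_tail hx m n)]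
  · refine tsum_congr fun j => ?_
    rw [← ENNReal.ofReal_mul (BB_pos hx _ _).le]
  · intro j
    have := (BB_pos hx (m+1) (n+1+j)).le
    have := (hpos j).le
    positivity

lemma hh_eq {x : ℝ} (hx : 0 ≤ x) (hx' : x ≤ 1/4) (n : ℕ) (hn : 1 ≤ n) :
    hh x n = rr x n * JJ x 0 n := by
  have hn' : (1:ℝ) ≤ n := by exact_mod_cast hn
  have h1 : JJ x 0 n = ENNReal.ofReal (2 * x * ((n:ℝ) - x) / (n * (n - 2 * x))) := by
    rw [← ofReal_tsum_hs _ (ff_hasSum hx hx' n hn)]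
    · unfold JJ
      refine tsum_congr fun j => ?_
      rw [← ENNReal.ofReal_mul (ff_nonneg hx hx' j), pow_zero, mul_one]
    · exact (fun m => mul_nonneg (ff_nonneg hx hx' m) (BB_pos hx' _ _).le)
  rw [h1, rr, hh, ← ENNReal.ofReal_mul]
  · congr 1
    have : (n:ℝ) - x ≠ 0 := by linarith
    have : (n:ℝ) - 2 * x ≠ 0 := by linarith
    field_simp
  · apply one_div_nonneg.mpr; linarith

lemma JJ_step {x : ℝ} (hx' : x ≤ 1/4) (p n : ℕ) :
    ∑' j : ℕ, rr x (n+1+j) * JJ x p (n+1+j) = JJ x (p+1) n := by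
  unfold JJ
  simp_rw [← ENNReal.tsum_mul_left]
  rw [ENNReal.tsum_comm]
  refine tsum_congr fun m => ?_
  rw [pow_succ', mul_assoc (ENNReal.ofReal (ff x m)), ← mul_assoc (ENNReal.ofReal (BB x (m+1) n)),
    ← BB_tail_enn hx' m n, ← ENNReal.tsum_mul_right, ← ENNReal.tsum_mul_left]
  refine tsum_congr fun j => ?_
  ring

lemma partB {x : ℝ} (hx : 0 ≤ x) (hx' : x ≤ 1/4) :
    ∑' n4 : ℕ, rr x (0+1+n4) * ∑' n3 : ℕ, rr x (0+1+n4+1+n3) *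
      ∑' n2 : ℕ, rr x (0+1+n4+1+n3+1+n2) * ∑' n1 : ℕ, hh x (0+1+n4+1+n3+1+n2+1+n1) =
    ∑' m : ℕ, ENNReal.ofReal ((PP x (m+1) + x / ((m:ℝ) + 1 - x)) / ((m:ℝ)+1)^4) := by
  have h1 : ∀ n j : ℕ, hh x (n+1+j) = rr x (n+1+j) * JJ x 0 (n+1+j) :=
    fun n j => hh_eq hx hx' _ (by omega)
  simp_rw [h1, JJ_step hx']
  unfold JJ
  refine tsum_congr fun m => ?_
  rw [← ENNReal.ofReal_mul (ff_nonneg hx hx' m), ff_zero hx', ← ENNReal.ofReal_pow (by positivity),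
    ← ENNReal.ofReal_mul]
  · congr 1
    push_cast
    rw [one_div, inv_pow]; rfl
  · rw [← ff_zero hx']
    exact mul_nonneg (ff_nonneg hx hx' m) (BB_pos hx' _ _).le

open ENNReal

lemma uniq_zero {D : ℕ → ℝ} {r : ℝ} (hr : 0 < r) (hs : Summable fun n => |D n| * r ^ n)
    (h : ∀ x, 0 < x → x ≤ r → ∑' n, D n * x ^ n = 0) : D 0 = 0 := by
  have h1 : Tendsto (fun x : ℝ => ∑' n, D n * x ^ n) (𝓝[>] 0) (𝓝 (∑' n, D n * 0 ^ n)) := by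
    apply tendsto_tsum_of_dominated_convergence hs
    · intro k
      have : Continuous fun x : ℝ => D k * x ^ k := by fun_prop
      exact (this.tendsto 0).mono_left nhdsWithin_le_nhds
    · filter_upwards [Ioc_mem_nhdsGT hr] with x hx k
      rw [norm_mul, Real.norm_eq_abs, Real.norm_of_nonneg (pow_nonneg hx.1.le k)]
      have := hx.1.le
      have := hx.2
      gcongr
  have h2 : ∑' n, D n * 0 ^ n = D 0 := by
    rw [tsum_eq_single 0]
    · simp
    · intro n hn; simp [hn]
  rw [h2] at h1
  have h3 : Tendsto (fun x : ℝ => ∑' n, D n * x ^ n) (𝓝[>] 0) (𝓝 0) := by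
    refine tendsto_const_nhds.congr' ?_
    filter_upwards [Ioc_mem_nhdsGT hr] with x hx
    exact (h x hx.1 hx.2).symm
  exact tendsto_nhds_unique h1 h3

lemma uniq_all (n : ℕ) : ∀ {D : ℕ → ℝ} {r : ℝ} (_ : 0 < r) (_ : Summable fun n => |D n| * r ^ n)
    (_ : ∀ x, 0 < x → x ≤ r → ∑' n, D n * x ^ n = 0), D n = 0 := by
  induction n with
  | zero => intro D r hr hs h; exact uniq_zero hr hs h
  | succ n ih =>
    intro D r hr hs h
    have h0 := uniq_zero hr hs h
    refine ih (D := fun n => D (n+1)) hr ?_ ?_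
    · have := (summable_nat_add_iff 1).mpr hs
      refine (this.mul_right (r⁻¹)).congr fun k => ?_
      field_simp
      ring
    · intro x hx hxr
      have hsx : Summable fun n => D n * x ^ n := by
        refine Summable.of_norm_bounded hs fun k => ?_
        rw [norm_mul, Real.norm_eq_abs, Real.norm_of_nonneg (pow_nonneg hx.le k)]
        gcongr
      have h1 := hsx.tsum_eq_zero_add
      rw [h x hx hxr, h0, zero_mul, zero_add] at h1
      have h2 : ∑' k, D (k+1) * x ^ (k+1) = (∑' k, D (k+1) * x ^ k) * x := by
        rw [← tsum_mul_right]
        refine tsum_congr fun k => ?_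
        ring
      rw [h2] at h1
      exact (mul_eq_zero.mp h1.symm).resolve_right hx.ne'

lemma uniq_enn {p q : ℕ → ℝ≥0∞} {r : ℝ} (hr : 0 < r)
    (h : ∀ x, 0 < x → x ≤ r → ∑' n, ENNReal.ofReal x ^ n * p n = ∑' n, ENNReal.ofReal x ^ n * q n)
    (hfin : ∀ x, 0 < x → x ≤ r → ∑' n, ENNReal.ofReal x ^ n * p n ≠ ⊤) (n : ℕ) :
    p n = q n := by
  have key : ∀ p : ℕ → ℝ≥0∞, (∀ x, 0 < x → x ≤ r → ∑' n, ENNReal.ofReal x ^ n * p n ≠ ⊤) →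
      (∀ n, p n ≠ ⊤) ∧ ∀ x, 0 < x → x ≤ r → HasSum (fun n => (p n).toReal * x ^ n)
        (∑' n, ENNReal.ofReal x ^ n * p n).toReal := by
    intro p hp
    refine ⟨fun n hn => ?_, fun x hx hxr => ?_⟩
    · have := ENNReal.ne_top_of_tsum_ne_top (hp r hr le_rfl) n
      rw [hn, ENNReal.mul_top] at this
      · exact this rfl
      · exact pow_ne_zero _ (by simpa using hr)
    · refine hs_congr (ENNReal.hasSum_toReal (hp x hx hxr)) (fun n => ?_) ?_
      · rw [ENNReal.toReal_mul, ENNReal.toReal_pow, ENNReal.toReal_ofReal hx.le, mul_comm]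
      · rw [ENNReal.tsum_toReal_eq (ENNReal.ne_top_of_tsum_ne_top (hp x hx hxr))]
  obtain ⟨hp1, hp2⟩ := key p hfin
  obtain ⟨hq1, hq2⟩ := key q (fun x hx hxr => (h x hx hxr) ▸ hfin x hx hxr)
  rw [← ENNReal.toReal_eq_toReal_iff' (hp1 n) (hq1 n), ← sub_eq_zero]
  refine uniq_all n (D := fun n => (p n).toReal - (q n).toReal) hr ?_ ?_
  · refine Summable.of_nonneg_of_le (fun n => by positivity) (fun n => ?_)
      ((hp2 r hr le_rfl).summable.add (hq2 r hr le_rfl).summable)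
    rw [← add_mul]
    gcongr
    rw [abs_le]
    have := (p n).toReal_nonneg
    have := (q n).toReal_nonneg
    constructor <;> linarith
  · intro x hx hxr
    have := (hp2 x hx hxr).sub (hq2 x hx hxr)
    rw [h x hx hxr, sub_self] at this
    refine (hs_congr this (fun n => ?_) rfl).tsum_eq
    ring

lemma anti_tsum (F : ℕ → ℕ → ℝ≥0∞) :
    ∑' n, ∑ i ∈ Finset.range (n+1), F i (n - i) = ∑' i, ∑' j, F i j := by
  rw [← ENNReal.tsum_prod, ← (Finset.HasAntidiagonal.sigmaAntidiagonalEquivProd (A := ℕ)).tsum_eq, ENNReal.tsum_sigma']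
  refine tsum_congr fun n => ?_
  rw [← Finset.Nat.sum_antidiagonal_eq_sum_range_succ F n]
  simp only [Finset.HasAntidiagonal.sigmaAntidiagonalEquivProd_apply]
  rw [Finset.tsum_subtype (Finset.HasAntidiagonal.antidiagonal n) (fun p => F p.1 p.2)]

lemma prod_tsum {α β : Type*} (f : α × β → ℝ≥0∞) : ∑' p, f p = ∑' a, ∑' b, f (a, b) :=
  ENNReal.tsum_prod (f := fun a b => f (a, b))

abbrev KK (d : ℕ) := {k : Fin d → ℕ // StrictAnti k ∧ ∀ i, 0 < k i}

noncomputable def iv (k : ℕ) : ℝ≥0∞ := ENNReal.ofReal (1 / (k:ℝ))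

noncomputable def Zn {d : ℕ} (s : Fin d → ℕ) : ℝ≥0∞ := ∑' k : KK d, ∏ i, iv (k.1 i) ^ s i

lemma mzv_eq {d : ℕ} (s : Fin d → ℕ) : mzv s = (Zn s).toReal := by
  unfold mzv Zn
  rw [ENNReal.tsum_toReal_eq]
  · refine tsum_congr fun k => ?_
    rw [ENNReal.toReal_prod]
    refine Finset.prod_congr rfl fun i _ => ?_
    rw [ENNReal.toReal_pow, iv, ENNReal.toReal_ofReal (by positivity), div_pow, one_pow]
  · intro k
    exact ENNReal.prod_ne_top fun i _ => ENNReal.pow_ne_top ENNReal.ofReal_ne_top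

def e1 : ℕ ≃ KK 1 where
  toFun n := ⟨![n+1], by
    refine ⟨fun i j h => ?_, fun i => ?_⟩
    · exact absurd h (by simp [Subsingleton.elim i j])
    · fin_cases i; simp⟩
  invFun k := k.1 0 - 1
  left_inv n := by simp
  right_inv k := by
    ext i
    have := k.2.2 0
    fin_cases i
    simp; omega

def e2 : ℕ × ℕ ≃ KK 2 where
  toFun p := ⟨![0+1+p.1+1+p.2, 0+1+p.1], by
    refine ⟨Fin.strictAnti_iff_succ_lt.mpr fun i => ?_, fun i => ?_⟩
    · fin_cases i; simp; omega
    · fin_cases i <;> simp <;> omega⟩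
  invFun k := (k.1 1 - 1, k.1 0 - k.1 1 - 1)
  left_inv p := by
    ext <;> simp <;> omega
  right_inv k := by
    ext i
    have h1 := k.2.2 1
    have h2 := k.2.1 (show (0 : Fin 2) < 1 by decide)
    fin_cases i <;> simp <;> omega

def e4 : ℕ × ℕ × ℕ × ℕ ≃ KK 4 where
  toFun p := ⟨![0+1+p.1+1+p.2.1+1+p.2.2.1+1+p.2.2.2, 0+1+p.1+1+p.2.1+1+p.2.2.1, 0+1+p.1+1+p.2.1, 0+1+p.1], by
    refine ⟨Fin.strictAnti_iff_succ_lt.mpr fun i => ?_, fun i => ?_⟩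
    · fin_cases i <;> simp <;> omega
    · fin_cases i <;> simp <;> omega⟩
  invFun k := (k.1 3 - 1, k.1 2 - k.1 3 - 1, k.1 1 - k.1 2 - 1, k.1 0 - k.1 1 - 1)
  left_inv p := by
    ext <;> simp <;> omega
  right_inv k := by
    ext i
    have h1 := k.2.2 3
    have h2 := k.2.1 (show (0 : Fin 4) < 1 by decide)
    have h3 := k.2.1 (show (1 : Fin 4) < 2 by decide)
    have h4 := k.2.1 (show (2 : Fin 4) < 3 by decide)
    fin_cases i <;> simp <;> omega

lemma Zn1 (a : ℕ) : Zn ![a] = ∑' n : ℕ, iv (n+1) ^ a := by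
  unfold Zn
  rw [← e1.tsum_eq]
  refine tsum_congr fun n => ?_
  simp [e1]

lemma Zn2 (a b : ℕ) : Zn ![a, b] = ∑' n : ℕ, ∑' m : ℕ, iv (0+1+n+1+m) ^ a * iv (0+1+n) ^ b := by
  unfold Zn
  rw [← ENNReal.tsum_prod, ← e2.tsum_eq]
  refine tsum_congr fun n => ?_
  simp [e2]

lemma sw {K : Type*} (P : K → ℝ≥0∞) (D : ℕ → K → ℝ≥0∞) :
    ∑' d, ∑' k, P k * D d k = ∑' k, P k * ∑' d, D d k := by
  rw [ENNReal.tsum_comm]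
  simp_rw [ENNReal.tsum_mul_left]

lemma sw4 {K : Type*} (A B C D : ℕ → K → ℝ≥0∞) :
    ∑' a, ∑' b, ∑' c, ∑' d, ∑' k, A a k * B b k * C c k * D d k =
    ∑' k, (∑' a, A a k) * (∑' b, B b k) * (∑' c, C c k) * (∑' d, D d k) := by
  have h1 : ∀ a b c, ∑' d, ∑' k, A a k * B b k * C c k * D d k =
      ∑' k, (A a k * B b k * ∑' d, D d k) * C c k := by
    intro a b c
    rw [sw]
    exact tsum_congr fun k => by ring
  have h2 : ∀ a b, ∑' c, ∑' k, (A a k * B b k * ∑' d, D d k) * C c k =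
      ∑' k, (A a k * (∑' c, C c k) * ∑' d, D d k) * B b k := by
    intro a b
    rw [sw]
    exact tsum_congr fun k => by ring
  have h3 : ∀ a, ∑' b, ∑' k, (A a k * (∑' c, C c k) * ∑' d, D d k) * B b k =
      ∑' k, ((∑' b, B b k) * (∑' c, C c k) * ∑' d, D d k) * A a k := by
    intro a
    rw [sw]
    exact tsum_congr fun k => by ring
  simp_rw [h1, h2, h3]
  rw [sw]
  exact tsum_congr fun k => by ring

lemma geo1 {x : ℝ} (hx : 0 ≤ x) (hx' : x ≤ 1/4) (k : ℕ) (hk : 1 ≤ k) (p : ℕ) :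
    ∑' d : ℕ, (ENNReal.ofReal x * iv k) ^ (d + p) =
      ENNReal.ofReal ((x / k) ^ p * (k / (k - x))) := by
  have hk' : (1:ℝ) ≤ k := by exact_mod_cast hk
  have h0 : 0 ≤ x / k := by positivity
  have h1 : x / k < 1 := by rw [div_lt_one (by linarith)]; linarith
  have h2 := (hasSum_geometric_of_lt_one h0 h1).mul_left ((x / k) ^ p)
  have e : (k:ℝ) / (k - x) = (1 - x / k)⁻¹ := by
    have : (k:ℝ) - x ≠ 0 := by linarith
    have : (k:ℝ) ≠ 0 := by linarith
    field_simp
  rw [e, ← ofReal_tsum_hs (fun n => by positivity) h2]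
  refine tsum_congr fun d => ?_
  rw [iv, ← ENNReal.ofReal_mul hx, ← ENNReal.ofReal_pow (by positivity), mul_one_div]
  congr 1
  ring

lemma geo_r {x : ℝ} (hx : 0 ≤ x) (hx' : x ≤ 1/4) (k : ℕ) (hk : 1 ≤ k) :
    ∑' d : ℕ, (ENNReal.ofReal x * iv k) ^ (d + 1) = ENNReal.ofReal x * rr x k := by
  have hk' : (1:ℝ) ≤ k := by exact_mod_cast hk
  rw [geo1 hx hx' k hk, rr, ← ENNReal.ofReal_mul hx]
  congr 1
  have : (k:ℝ) - x ≠ 0 := by linarith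
  field_simp

lemma geo_h {x : ℝ} (hx : 0 ≤ x) (hx' : x ≤ 1/8) (k : ℕ) (hk : 1 ≤ k) :
    ∑' d : ℕ, (2 * ENNReal.ofReal x * iv k) ^ (d + 2) = 2 * ENNReal.ofReal x * hh x k := by
  have hk' : (1:ℝ) ≤ k := by exact_mod_cast hk
  have e : 2 * ENNReal.ofReal x = ENNReal.ofReal (2 * x) := by
    rw [ENNReal.ofReal_mul (by norm_num)]; simp
  rw [e, geo1 (by linarith) (by linarith) k hk, hh, ← ENNReal.ofReal_mul (by linarith)]
  congr 1
  have : (k:ℝ) - 2 * x ≠ 0 := by linarith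
  field_simp

noncomputable def Lz (n : ℕ) : ℝ≥0∞ :=
  ∑ a ∈ Finset.range (n+1), ∑ b ∈ Finset.range (n - a + 1), ∑ c ∈ Finset.range (n - a - b + 1),
    2 ^ (a+2) * Zn ![a+2, b+1, c+1, n - a - b - c + 1]

lemma gen_L {x : ℝ} (hx : 0 ≤ x) (hx' : x ≤ 1/8) :
    ∑' n, ENNReal.ofReal x ^ (n+5) * Lz n = 2 * ENNReal.ofReal x ^ 4 *
     ∑' m : ℕ, ENNReal.ofReal ((PP x (m+1) + x / ((m:ℝ) + 1 - x)) / ((m:ℝ)+1)^4) := by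
  set X := ENNReal.ofReal x with hX
  have h1 : ∑' n, X ^ (n+5) * Lz n = ∑' a, ∑' b, ∑' c, ∑' d,
      X ^ (a+b+c+d+5) * (2 ^ (a+2) * Zn ![a+2, b+1, c+1, d+1]) := by
    simp_rw [← anti_tsum (fun c d => _)]
    refine tsum_congr fun n => ?_
    rw [Lz, Finset.mul_sum]
    refine Finset.sum_congr rfl fun a ha => ?_
    rw [Finset.mul_sum]
    refine Finset.sum_congr rfl fun b hb => ?_
    rw [Finset.mul_sum]
    refine Finset.sum_congr rfl fun c hc => ?_
    simp only [Finset.mem_range] at ha hb hc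
    congr 2
    omega
  rw [h1, ← partB hx (by linarith)]
  have h2 : ∀ a b c d : ℕ, X ^ (a+b+c+d+5) * (2 ^ (a+2) * Zn ![a+2, b+1, c+1, d+1]) =
      ∑' k : KK 4, (2 * X * iv (k.1 0)) ^ (a+2) * (X * iv (k.1 1)) ^ (b+1) *
        (X * iv (k.1 2)) ^ (c+1) * (X * iv (k.1 3)) ^ (d+1) := by
    intro a b c d
    rw [Zn, ← mul_assoc, ← ENNReal.tsum_mul_left]
    refine tsum_congr fun k => ?_
    rw [Fin.prod_univ_four]
    simp only [Matrix.cons_val]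
    ring
  simp_rw [h2]
  rw [sw4 (fun a (k : KK 4) => (2 * X * iv (k.1 0)) ^ (a+2)) (fun a (k : KK 4) => (X * iv (k.1 1)) ^ (a+1))
    (fun a (k : KK 4) => (X * iv (k.1 2)) ^ (a+1)) (fun a (k : KK 4) => (X * iv (k.1 3)) ^ (a+1))]
  have h3 : ∀ k : KK 4, (∑' a, (2 * X * iv (k.1 0)) ^ (a+2)) * (∑' b, (X * iv (k.1 1)) ^ (b+1)) *
        (∑' c, (X * iv (k.1 2)) ^ (c+1)) * (∑' d, (X * iv (k.1 3)) ^ (d+1)) =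
      2 * X ^ 4 * (rr x (k.1 3) * (rr x (k.1 2) * (rr x (k.1 1) * hh x (k.1 0)))) := by
    intro k
    rw [geo_h hx hx' _ (k.2.2 0), geo_r hx (by linarith) _ (k.2.2 1),
      geo_r hx (by linarith) _ (k.2.2 2), geo_r hx (by linarith) _ (k.2.2 3)]
    ring
  simp_rw [h3]
  rw [ENNReal.tsum_mul_left]
  congr 1
  simp_rw [← ENNReal.tsum_mul_left]
  rw [← e4.tsum_eq, prod_tsum]
  refine tsum_congr fun n4 => ?_
  rw [prod_tsum]
  refine tsum_congr fun n3 => ?_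
  rw [prod_tsum]
  rfl

lemma gen1 {x : ℝ} (hx : 0 ≤ x) (hx' : x ≤ 1/8) :
    ∑' n, ENNReal.ofReal x ^ (n+5) * Zn ![n+5] = ENNReal.ofReal x ^ 4 *
     ∑' m : ℕ, ENNReal.ofReal (x / (((m:ℝ)+1)^4 * ((m:ℝ) + 1 - x))) := by
  simp_rw [Zn1, ← ENNReal.tsum_mul_left]
  rw [ENNReal.tsum_comm]
  refine tsum_congr fun m => ?_
  simp_rw [← mul_pow]
  have hm : (0:ℝ) ≤ m := Nat.cast_nonneg m
  rw [geo1 hx (by linarith) _ (by omega), ← ENNReal.ofReal_pow hx, ← ENNReal.ofReal_mul (by positivity)]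
  congr 1
  push_cast
  have h1 : (m:ℝ) + 1 - x ≠ 0 := by linarith
  field_simp

lemma gen2 {x : ℝ} (hx : 0 ≤ x) (hx' : x ≤ 1/8) :
    ∑' n, ENNReal.ofReal x ^ (n+5) * Zn ![3, n+2] = ENNReal.ofReal x ^ 4 *
     ∑' j : ℕ, ∑' i : ℕ, ENNReal.ofReal (x / (((j:ℝ)+(i+1)+1)^3 * ((j:ℝ)+1) * ((j:ℝ) + 1 - x))) := by
  simp_rw [Zn2, ← ENNReal.tsum_mul_left]
  rw [ENNReal.tsum_comm]
  refine tsum_congr fun j => ?_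
  rw [ENNReal.tsum_comm]
  refine tsum_congr fun i => ?_
  have hj : (0:ℝ) ≤ j := Nat.cast_nonneg j
  have h : ∀ n, ENNReal.ofReal x ^ (n+5) * (iv (0+1+j+1+i) ^ 3 * iv (0+1+j) ^ (n+2)) =
      (ENNReal.ofReal x ^ 3 * iv (0+1+j+1+i) ^ 3) * (ENNReal.ofReal x * iv (0+1+j)) ^ (n+2) := by
    intro n; ring
  simp_rw [h]
  rw [ENNReal.tsum_mul_left, geo1 hx (by linarith) _ (by omega), iv, ← ENNReal.ofReal_pow hx,
    ← ENNReal.ofReal_pow hx,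
    ← ENNReal.ofReal_pow (by positivity), ← ENNReal.ofReal_mul (by positivity),
    ← ENNReal.ofReal_mul (by positivity), ← ENNReal.ofReal_mul (by positivity)]
  congr 1
  push_cast
  rw [show (1:ℝ) + j + 1 + i = j + (i+1) + 1 by ring, show (1:ℝ) + j = j + 1 by ring]
  have h1 : (j:ℝ) + 1 - x ≠ 0 := by linarith
  field_simp

lemma geo2 {x : ℝ} (hx : 0 ≤ x) (hx' : x ≤ 1/4) (k : ℝ) (hk' : 1 ≤ k) :
    HasSum (fun n : ℕ => x ^ (n+5) * ((n:ℝ)+2) * (1 / k) ^ (n+3))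
      (x ^ 4 * (1 / (k - x)^2 - 1 / k^2)) := by
  have h0 : 0 ≤ x / k := by positivity
  have h1 : x / k < 1 := by rw [div_lt_one (by linarith)]; linarith
  have h2 := hasSum_geometric_of_lt_one h0 h1
  have h3 := hasSum_coe_mul_geometric_of_norm_lt_one (r := x / k) (by rwa [Real.norm_of_nonneg h0])
  refine hs_congr ((h3.add (h2.mul_left 2)).mul_left (x^5 / k^3)) (fun n => ?_) ?_
  · rw [div_pow, div_pow, one_pow, pow_add k, pow_add x]
    have : k ≠ 0 := by linarith
    field_simp
  · have h4 : k - x ≠ 0 := by linarith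
    have h5 : k ≠ 0 := by linarith
    rw [show 1 - x / k = (k - x) / k by field_simp]
    field_simp
    ring

lemma gen3 {x : ℝ} (hx : 0 ≤ x) (hx' : x ≤ 1/8) :
    ∑' n : ℕ, ENNReal.ofReal x ^ (n+5) * (((n+2 : ℕ) : ℝ≥0∞) * Zn ![n+3, 2]) = ENNReal.ofReal x ^ 4 *
     ∑' j : ℕ, ∑' i : ℕ, ENNReal.ofReal (f2 x (i, j) - f2 0 (i, j)) := by
  simp_rw [Zn2, ← ENNReal.tsum_mul_left]
  rw [ENNReal.tsum_comm]
  refine tsum_congr fun j => ?_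
  rw [ENNReal.tsum_comm]
  refine tsum_congr fun i => ?_
  have hj : (0:ℝ) ≤ j := Nat.cast_nonneg j
  have hi : (0:ℝ) ≤ i := Nat.cast_nonneg i
  have h := (geo2 hx (by linarith) ((0+1+j+1+i : ℕ) : ℝ) (by push_cast; linarith)).mul_left
    (1 / (((0+1+j : ℕ) : ℝ))^2)
  have h2 := ofReal_tsum_hs (fun n => by positivity) h
  rw [← ENNReal.ofReal_pow hx, ← ENNReal.ofReal_mul (by positivity)]
  convert h2 using 1
  · refine tsum_congr fun n => ?_
    rw [iv, iv, ← ENNReal.ofReal_natCast, ← ENNReal.ofReal_pow hx, ← ENNReal.ofReal_pow (by positivity),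
      ← ENNReal.ofReal_pow (by positivity), ← ENNReal.ofReal_mul (by positivity),
      ← ENNReal.ofReal_mul (by positivity), ← ENNReal.ofReal_mul (by positivity)]
    congr 1
    rw [div_pow 1 _ 2, one_pow]
    push_cast
    ring
  · congr 1
    simp only [f2]
    push_cast
    rw [show (1:ℝ) + j + 1 + i = j + i + 2 by ring, show (1:ℝ) + j = j + 1 by ring]
    have h1 : (j:ℝ) + i + 2 - x ≠ 0 := by linarith
    rw [sub_zero]
    field_simp

lemma f2_mono {x : ℝ} (hx : 0 ≤ x) (hx' : x ≤ 1/8) (p : ℕ × ℕ) : 0 ≤ f2 x p - f2 0 p := by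
  obtain ⟨k, n⟩ := p
  simp only [f2, sub_nonneg, sub_zero]
  have hk : (0:ℝ) ≤ k := Nat.cast_nonneg k
  have hn : (0:ℝ) ≤ n := Nat.cast_nonneg n
  have h1 : 0 < (n:ℝ) + k + 2 - x := by linarith
  apply one_div_le_one_div_of_le (by positivity)
  gcongr
  linarith

lemma TT_enn {x : ℝ} (hx : 0 ≤ x) (hx' : x ≤ 1/8) :
    0 ≤ TT x - TT 0 ∧
    ∑' j : ℕ, ∑' i : ℕ, ENNReal.ofReal (f2 x (i, j) - f2 0 (i, j)) = ENNReal.ofReal (TT x - TT 0) := by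
  have hs := (f2_summable (x := x) (by linarith)).hasSum.sub (f2_summable (x := 0) (by norm_num)).hasSum
  rw [f2_tsum (by linarith), f2_tsum (by norm_num)] at hs
  refine ⟨hs.nonneg (f2_mono hx hx'), ?_⟩
  rw [← hs.tsum_eq, ENNReal.ofReal_tsum_of_nonneg (f2_mono hx hx') hs.summable, prod_tsum,
    ENNReal.tsum_comm]

lemma UU_enn {x : ℝ} (hx : 0 ≤ x) (hx' : x ≤ 1/8) :
    0 ≤ UU x - UU 0 ∧
    (∑' m : ℕ, ENNReal.ofReal (x / (((m:ℝ)+1)^4 * ((m:ℝ) + 1 - x)))) +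
    ∑' j : ℕ, ∑' i : ℕ, ENNReal.ofReal (x / (((j:ℝ)+(i+1)+1)^3 * ((j:ℝ)+1) * ((j:ℝ) + 1 - x)))
      = ENNReal.ofReal (UU x - UU 0) := by
  have hs := (UU_hasSum (x := x) (by linarith)).sub (UU_hasSum (x := 0) (by norm_num))
  have u1 : UU x = ∑' p, f3 x p := (UU_hasSum (by linarith)).tsum_eq
  have u2 : UU 0 = ∑' p, f3 0 p := (UU_hasSum (by norm_num)).tsum_eq
  rw [← u1, ← u2] at hs
  have hpos : ∀ j : ℕ, 0 < (j:ℝ) + 1 - x := fun j => by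
    have hj : (0:ℝ) ≤ j := Nat.cast_nonneg j
    linarith
  have hs' : HasSum (fun n : ℕ => ∑ k ∈ Finset.range (n+1),
      x / (((n:ℝ)+1)^3 * ((k:ℝ)+1) * ((k:ℝ)+1-x))) (UU x - UU 0) := by
    refine hs_congr hs (fun n => ?_) rfl
    rw [← mul_sub, ← Finset.sum_sub_distrib, Finset.mul_sum]
    refine Finset.sum_congr rfl fun k _ => ?_
    have := (hpos k).ne'
    rw [sub_zero]
    field_simp
    ring
  have hnn : ∀ n k : ℕ, 0 ≤ x / (((n:ℝ)+1)^3 * ((k:ℝ)+1) * ((k:ℝ)+1-x)) := fun n k => by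
    have := (hpos k).le
    positivity
  have hnn' : ∀ n : ℕ, 0 ≤ ∑ k ∈ Finset.range (n+1), x / (((n:ℝ)+1)^3 * ((k:ℝ)+1) * ((k:ℝ)+1-x)) :=
    fun n => Finset.sum_nonneg fun k _ => hnn n k
  refine ⟨hs'.nonneg hnn', ?_⟩
  rw [← ofReal_tsum_hs hnn' hs']
  have h1 : ∀ n : ℕ, ENNReal.ofReal (∑ k ∈ Finset.range (n+1),
      x / (((n:ℝ)+1)^3 * ((k:ℝ)+1) * ((k:ℝ)+1-x))) = ∑ k ∈ Finset.range (n+1),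
      (fun k i : ℕ => ENNReal.ofReal (x / (((k:ℝ)+i+1)^3 * ((k:ℝ)+1) * ((k:ℝ)+1-x)))) k (n - k) := by
    intro n
    rw [ENNReal.ofReal_sum_of_nonneg (fun k _ => hnn n k)]
    refine Finset.sum_congr rfl fun k hk => ?_
    have : k ≤ n := by simp at hk; omega
    simp only [Nat.cast_sub this]
    congr 4
    ring
  rw [tsum_congr h1, anti_tsum (fun k i : ℕ => ENNReal.ofReal (x / (((k:ℝ)+i+1)^3 * ((k:ℝ)+1) * ((k:ℝ)+1-x)))), ← ENNReal.tsum_add]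
  refine tsum_congr fun k => ?_
  symm
  rw [tsum_eq_zero_add' ENNReal.summable]
  push_cast
  congr 3
  ring

lemma gen_main {x : ℝ} (hx : 0 ≤ x) (hx' : x ≤ 1/8) :
    (∑' n, ENNReal.ofReal x ^ (n+5) * (Lz n + ((n+2 : ℕ) : ℝ≥0∞) * Zn ![n+3, 2]) =
      ∑' n, ENNReal.ofReal x ^ (n+5) * (4 * Zn ![n+5] + 2 * Zn ![3, n+2])) ∧
    ∑' n, ENNReal.ofReal x ^ (n+5) * (Lz n + ((n+2 : ℕ) : ℝ≥0∞) * Zn ![n+3, 2]) ≠ ⊤ := by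
  set X := ENNReal.ofReal x with hX
  have hXt : X ≠ ⊤ := ENNReal.ofReal_ne_top
  obtain ⟨t1, t2⟩ := TT_enn hx hx'
  obtain ⟨u1, u2⟩ := UU_enn hx hx'
  have hpos : ∀ j : ℕ, 0 < (j:ℝ) + 1 - x := fun j => by
    have hj : (0:ℝ) ≤ j := Nat.cast_nonneg j
    linarith
  have hs1 : Summable (fun m : ℕ => x / (((m:ℝ)+1)^4 * ((m:ℝ) + 1 - x))) := by
    refine Summable.of_nonneg_of_le (fun m => ?_) (fun m => ?_) (summ_inv 4 (by norm_num))
    · have := (hpos m).le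
      positivity
    · have := hpos m
      have hm : (0:ℝ) ≤ m := Nat.cast_nonneg m
      rw [mul_comm, ← div_div]
      gcongr
      rw [div_le_one this]
      linarith
  have hw1 : ∀ m : ℕ, 0 ≤ x / (((m:ℝ)+1)^4 * ((m:ℝ) + 1 - x)) := fun m => by
    have := (hpos m).le
    positivity
  set w1 := ∑' m : ℕ, x / (((m:ℝ)+1)^4 * ((m:ℝ) + 1 - x)) with hw1def
  have hw1n : 0 ≤ w1 := tsum_nonneg hw1
  have hW1 : ∑' m : ℕ, ENNReal.ofReal (x / (((m:ℝ)+1)^4 * ((m:ℝ) + 1 - x))) = ENNReal.ofReal w1 :=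
    ofReal_tsum_hs hw1 hs1.hasSum
  have hterm : ∀ m : ℕ, 0 ≤ (PP x (m+1) + x / ((m:ℝ) + 1 - x)) / ((m:ℝ)+1)^4 := fun m => by
    rw [← ff_zero (by linarith)]
    have := mul_nonneg (ff_nonneg hx (by linarith) m) (BB_pos (x := x) (by linarith) (m+1) 0).le
    positivity
  have hsB : HasSum (fun m : ℕ => (PP x (m+1) + x / ((m:ℝ) + 1 - x)) / ((m:ℝ)+1)^4) (A2 x + w1) := by
    refine hs_congr ((PP_summable (x := x) (by linarith) 4 (by norm_num)).hasSum.add hs1.hasSum)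
      (fun m => ?_) rfl
    have := (hpos m).ne'
    field_simp
  have hBn : 0 ≤ A2 x + w1 := hsB.nonneg hterm
  have eL : ∑' n, X ^ (n+5) * (Lz n + ((n+2 : ℕ) : ℝ≥0∞) * Zn ![n+3, 2]) =
      2 * X ^ 4 * ENNReal.ofReal (A2 x + w1) + X ^ 4 * ENNReal.ofReal (TT x - TT 0) := by
    simp_rw [mul_add]
    rw [ENNReal.tsum_add, gen_L hx hx', gen3 hx hx', t2, ofReal_tsum_hs hterm hsB]
  have eR : ∑' n, X ^ (n+5) * (4 * Zn ![n+5] + 2 * Zn ![3, n+2]) =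
      2 * X ^ 4 * (ENNReal.ofReal w1 + ENNReal.ofReal (UU x - UU 0)) := by
    have : ∀ n, X ^ (n+5) * (4 * Zn ![n+5] + 2 * Zn ![3, n+2]) =
      4 * (X ^ (n+5) * Zn ![n+5]) + 2 * (X ^ (n+5) * Zn ![3, n+2]) := fun n => by ring
    simp_rw [this]
    rw [ENNReal.tsum_add, ENNReal.tsum_mul_left, ENNReal.tsum_mul_left, gen1 hx hx', gen2 hx hx', ← u2,
      hW1]
    ring
  refine ⟨?_, ?_⟩
  · rw [eL, eR]
    have h2 : (2:ℝ≥0∞) = ENNReal.ofReal 2 := by simp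
    rw [← ENNReal.ofReal_add hw1n u1, mul_comm 2 (X^4), mul_assoc, mul_assoc,
      ← mul_add, h2,
      ← ENNReal.ofReal_mul (by norm_num), ← ENNReal.ofReal_mul (by norm_num),
      ← ENNReal.ofReal_add (by positivity) t1]
    congr 2
    rw [A2_eq (by linarith)]
    ring
  · rw [eL]
    finiteness

lemma coef_main (n : ℕ) : Lz n + ((n+2 : ℕ) : ℝ≥0∞) * Zn ![n+3, 2] = 4 * Zn ![n+5] + 2 * Zn ![3, n+2] ∧
    Lz n + ((n+2 : ℕ) : ℝ≥0∞) * Zn ![n+3, 2] ≠ ⊤ := by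
  have hX : ∀ x : ℝ, 0 < x → ENNReal.ofReal x ^ 5 ≠ 0 := fun x hx => pow_ne_zero _ (by simpa using hx)
  have hXt : ∀ x : ℝ, ENNReal.ofReal x ^ 5 ≠ ⊤ := fun x => by finiteness
  have hfac : ∀ (x : ℝ) (p : ℕ → ℝ≥0∞), ∑' n, ENNReal.ofReal x ^ (n+5) * p n =
      ENNReal.ofReal x ^ 5 * ∑' n, ENNReal.ofReal x ^ n * p n := by
    intro x p
    rw [← ENNReal.tsum_mul_left]
    exact tsum_congr fun n => by ring
  have hfin : ∀ x : ℝ, 0 < x → x ≤ 1/8 →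
      ∑' n, ENNReal.ofReal x ^ n * (Lz n + ((n+2 : ℕ) : ℝ≥0∞) * Zn ![n+3, 2]) ≠ ⊤ := by
    intro x hx hx' htop
    have := (gen_main hx.le hx').2
    rw [hfac, htop, ENNReal.mul_top (hX x hx)] at this
    exact this rfl
  refine ⟨?_, ?_⟩
  · refine uniq_enn (p := fun n => Lz n + ((n+2 : ℕ) : ℝ≥0∞) * Zn ![n+3, 2])
      (q := fun n => 4 * Zn ![n+5] + 2 * Zn ![3, n+2]) (r := 1/8) (by norm_num) ?_ hfin n
    intro x hx hx'
    have := (gen_main hx.le hx').1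
    rw [hfac, hfac] at this
    exact (ENNReal.mul_right_inj (hX x hx) (hXt x)).mp this
  · intro htop
    have := ENNReal.ne_top_of_tsum_ne_top (hfin (1/8) (by norm_num) le_rfl) n
    rw [htop, ENNReal.mul_top (pow_ne_zero _ (by simp))] at this
    exact this rfl

lemma sum_Icc_shift (f : ℕ → ℝ) (c m : ℕ) :
    ∑ a ∈ Finset.Icc c (m + c), f a = ∑ a ∈ Finset.range (m+1), f (a + c) := by
  rw [Finset.range_eq_Ico, Finset.sum_Ico_add' f 0 (m+1) c]
  congr 1
  ext a; simp; omega

lemma Lz_real (n : ℕ) (hfin : Lz n ≠ ⊤) :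
    (∑ a ∈ Finset.Icc 2 (n + 5 - 3), ∑ b ∈ Finset.Icc 1 (n + 5 - a - 2),
      ∑ c ∈ Finset.Icc 1 (n + 5 - a - b - 1),
        (2 : ℝ) ^ a * mzv ![a, b, c, n + 5 - a - b - c]) = (Lz n).toReal := by
  rw [Lz] at hfin ⊢
  have h1 := ENNReal.sum_ne_top.mp hfin
  rw [ENNReal.toReal_sum h1, show n + 5 - 3 = n + 2 by omega, sum_Icc_shift]
  refine Finset.sum_congr rfl fun a ha => ?_
  have h2 := ENNReal.sum_ne_top.mp (h1 a ha)
  simp only [Finset.mem_range] at ha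
  rw [ENNReal.toReal_sum h2, show n + 5 - (a + 2) - 2 = n - a + 1 by omega, sum_Icc_shift]
  refine Finset.sum_congr rfl fun b hb => ?_
  have h3 := ENNReal.sum_ne_top.mp (h2 b hb)
  simp only [Finset.mem_range] at hb
  rw [ENNReal.toReal_sum h3, show n + 5 - (a + 2) - (b + 1) - 1 = n - a - b + 1 by omega, sum_Icc_shift]
  refine Finset.sum_congr rfl fun c hc => ?_
  simp only [Finset.mem_range] at hc
  rw [ENNReal.toReal_mul, ENNReal.toReal_pow, mzv_eq,
    show n + 5 - (a + 2) - (b + 1) - (c + 1) = n - a - b - c + 1 by omega]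
  simp

end

theorem weighted_sum_depth4_2a (w : ℕ) (hw : 5 ≤ w)
    (q u : ℕ) (hq : q = w - 3) (hu : u = w - 2) :
    (∑ a ∈ Finset.Icc 2 (w - 3), ∑ b ∈ Finset.Icc 1 (w - a - 2),
      ∑ c ∈ Finset.Icc 1 (w - a - b - 1),
        (2 : ℝ) ^ a * mzv ![a, b, c, w - a - b - c])
    = 4 * mzv ![w] + 2 * mzv ![3, q] - (q : ℝ) * mzv ![u, 2] := by
  obtain ⟨n, rfl⟩ := Nat.exists_eq_add_of_le' hw
  obtain rfl : q = n + 2 := by omega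
  obtain rfl : u = n + 3 := by omega
  obtain ⟨h1, h2⟩ := coef_main n
  have h3 := h2
  rw [h1] at h3
  obtain ⟨hL, hT⟩ := ENNReal.add_ne_top.mp h2
  obtain ⟨hW, hU⟩ := ENNReal.add_ne_top.mp h3
  rw [Lz_real n hL, mzv_eq, mzv_eq, mzv_eq]
  have h4 := congrArg ENNReal.toReal h1
  rw [ENNReal.toReal_add hL hT, ENNReal.toReal_add hW hU, ENNReal.toReal_mul, ENNReal.toReal_mul,
    ENNReal.toReal_mul, ENNReal.toReal_natCast] at h4
  simp only [ENNReal.toReal_ofNat] at h4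
  linarith
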